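/- arXiv:1208.5298 — 4 statements merged into one kernel-verified Lean document; each statement's English description precedes it below -/
import Mathlib

section
/- Let R be a commutative ring and D a subring of R which is a unique factorization domain. If there exists an irreducible element p ∈ D such that 1/p ∈ R (i.e., p is a unit of R), then R has a maximal subring. -/
/-- A ring is submaximal if it has a maximal subring. -/
def Submaximal (R : Type*) [CommRing R] : Prop :=
  ∃ S : Subring R, S ≠ ⊤ ∧ ∀ T : Subring R, S < T → T = ⊤

/-!
Write `α = 1/p`. If a subring `S` omits `α` while `S` and `α` generate `R`, then a subring that is
maximal among those containing `S` and omitting `α` is a maximal subring of `R`. Adjoining a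
transcendence basis of `R` over `D` keeps `p` prime and creates no nonzero element divisible by all
powers of `p`, so one may assume that `R` is algebraic over `D`. Then `S` can be taken to be the
integral closure in `R` of the localization of `D` at `(p)`. It omits `α`, because `p ∣ b ^ n` for
some `n` as soon as `b / p` is integral over `D`. Together with `α` it generates `R`, because every
`r : R` has an integral multiple `a • r` with `a ≠ 0`, and `a = p ^ n * b` with `p ∤ b`.
-/

section MaximalSubring

theorem exists_le_maximal_notMem {R : Type*} [NonAssocRing R] {S : Subring R} {x : R}
    (hx : x ∉ S) : ∃ M : Subring R, S ≤ M ∧ Maximal (fun T : Subring R ↦ x ∉ T) M := by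
  refine zorn_le_nonempty₀ {T : Subring R | x ∉ T} (fun c hc hchain T hT ↦ ?_) S hx
  refine ⟨sSup c, fun h ↦ ?_, fun _ ↦ le_sSup⟩
  obtain ⟨U, hU, hxU⟩ := (Subring.mem_sSup_of_directedOn ⟨T, hT⟩ hchain.directedOn).mp h
  exact hc hU hxU

theorem submaximal_of_sup_closure_singleton_eq_top {R : Type*} [CommRing R] {S : Subring R} {x : R}
    (hx : x ∉ S) (hS : S ⊔ Subring.closure {x} = ⊤) : Submaximal R := by
  obtain ⟨M, hSM, hM⟩ := exists_le_maximal_notMem hx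
  refine ⟨M, fun h ↦ hM.prop (h ▸ Subring.mem_top x), fun T hMT ↦ ?_⟩
  have hxT : x ∈ T := not_not.mp (hM.not_prop_of_gt hMT)
  rw [eq_top_iff, ← hS]
  exact sup_le (hSM.trans hMT.le) (Subring.closure_le.mpr (Set.singleton_subset_iff.mpr hxT))

theorem sup_closure_singleton_eq_top_of_forall_exists_pow_mul_mem {R : Type*} [CommRing R]
    {S : Subring R} {u x : R} (hux : u * x = 1) (hS : ∀ r, ∃ n : ℕ, u ^ n * r ∈ S) :
    S ⊔ Subring.closure {x} = ⊤ := by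
  refine eq_top_iff.mpr fun r _ ↦ ?_
  obtain ⟨n, hn⟩ := hS r
  have hr : r = u ^ n * r * x ^ n := by
    rw [mul_right_comm, ← mul_pow, hux, one_pow, one_mul]
  have hx : x ∈ S ⊔ Subring.closure {x} := le_sup_right (a := S) (Subring.mem_closure_of_mem rfl)
  rw [hr]
  exact mul_mem (le_sup_left (a := S) hn) (pow_mem hx n)

end MaximalSubring

section LocalizedIntegralClosure

variable {A : Type*} (R : Type*) [CommRing A] [CommRing R] [Algebra A R]

/-- The elements of `R` that are integral over the localization `M⁻¹A`, described by clearing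
denominators so that `R` need not be an algebra over `M⁻¹A`. -/
def localizedIntegralClosure (M : Submonoid A) : Subalgebra A R where
  carrier := {r | ∃ b ∈ M, IsIntegral A (b • r)}
  algebraMap_mem' a := ⟨1, M.one_mem, by simpa only [one_smul] using isIntegral_algebraMap⟩
  add_mem' := by
    rintro x y ⟨b, hb, hx⟩ ⟨c, hc, hy⟩
    refine ⟨b * c, M.mul_mem hb hc, ?_⟩
    rw [smul_add, mul_smul, smul_comm, mul_smul]
    exact (hx.smul c).add (hy.smul b)
  mul_mem' := by
    rintro x y ⟨b, hb, hx⟩ ⟨c, hc, hy⟩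
    refine ⟨b * c, M.mul_mem hb hc, ?_⟩
    rw [← smul_mul_smul_comm]
    exact hx.mul hy

variable {R} {M : Submonoid A} {p : A} {x : R}

theorem exists_dvd_pow_of_isIntegral_smul [FaithfulSMul A R] {b : A} (hpx : p • x = 1)
    (hbx : IsIntegral A (b • x)) : ∃ n : ℕ, p ∣ b ^ n := by
  obtain ⟨f, hf, hfbx⟩ := hbx
  refine ⟨f.natDegree, Polynomial.dvd_pow_natDegree_of_eval₂_eq_zero
    (FaithfulSMul.algebraMap_injective A R) hf p b _ hfbx ?_⟩
  rw [← Algebra.smul_def, smul_comm, hpx, Algebra.algebraMap_eq_smul_one]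

theorem notMem_localizedIntegralClosure [FaithfulSMul A R] (hM : ∀ b ∈ M, ¬ p ∣ b)
    (hpx : p • x = 1) : x ∉ localizedIntegralClosure R M := by
  rintro ⟨b, hb, hbx⟩
  obtain ⟨n, hn⟩ := exists_dvd_pow_of_isIntegral_smul hpx hbx
  exact hM _ (pow_mem hb n) hn

theorem exists_pow_smul_mem_localizedIntegralClosure
    (hM : ∀ a ≠ 0, ∃ n : ℕ, ∃ b ∈ M, a = p ^ n * b) (hx : IsAlgebraic A x) :
    ∃ n : ℕ, p ^ n • x ∈ localizedIntegralClosure R M := by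
  obtain ⟨a, ha, hax⟩ := hx.exists_integral_multiple
  obtain ⟨n, b, hb, rfl⟩ := hM a ha
  exact ⟨n, b, hb, by rwa [smul_smul, mul_comm]⟩

theorem submaximal_of_isAlgebraic [FaithfulSMul A R] [Algebra.IsAlgebraic A R] (hp : Prime p)
    (hfin : ∀ a ≠ 0, FiniteMultiplicity p a) (hpu : IsUnit (algebraMap A R p)) :
    Submaximal R := by
  obtain ⟨α, hα⟩ := hpu.exists_right_inv
  have : (Ideal.span {p}).IsPrime := (Ideal.span_singleton_prime hp.ne_zero).mpr hp
  let M : Submonoid A := (Ideal.span {p}).primeCompl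
  have mem_M (b : A) : b ∈ M ↔ ¬ p ∣ b := Ideal.mem_span_singleton.not
  have hM (a : A) (ha : a ≠ 0) : ∃ n : ℕ, ∃ b ∈ M, a = p ^ n * b := by
    obtain ⟨b, hab, hb⟩ := (hfin a ha).exists_eq_pow_mul_and_not_dvd
    exact ⟨_, b, (mem_M b).mpr hb, hab⟩
  refine submaximal_of_sup_closure_singleton_eq_top (S := (localizedIntegralClosure R M).toSubring)
    (x := α) ?_ (sup_closure_singleton_eq_top_of_forall_exists_pow_mul_mem hα fun r ↦ ?_)
  · exact notMem_localizedIntegralClosure (fun b ↦ (mem_M b).mp) (by rwa [Algebra.smul_def])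
  · obtain ⟨n, hn⟩ := exists_pow_smul_mem_localizedIntegralClosure hM
      (Algebra.IsAlgebraic.isAlgebraic (R := A) r)
    exact ⟨n, by rwa [Algebra.smul_def, map_pow] at hn⟩

end LocalizedIntegralClosure

section PolynomialExtension

theorem finiteMultiplicity_mvPolynomial_C {σ A : Type*} [CommSemiring A] {p : A}
    {f : MvPolynomial σ A} {m : σ →₀ ℕ} (h : FiniteMultiplicity p (f.coeff m)) :
    FiniteMultiplicity (MvPolynomial.C p) f := by
  obtain ⟨n, hn⟩ := h
  refine ⟨n, fun hdvd ↦ hn ?_⟩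
  rw [← map_pow, MvPolynomial.C_dvd_iff_dvd_coeff] at hdvd
  exact hdvd m

variable {ι D R : Type*} [CommRing D] [CommRing R] [Algebra D R] {v : ι → R} {p : D}

theorem aevalEquiv_C (hv : AlgebraicIndependent D v) (a : D) :
    hv.aevalEquiv (MvPolynomial.C a) = algebraMap D _ a :=
  hv.aevalEquiv.commutes a

theorem prime_algebraMap_adjoin_range (hv : AlgebraicIndependent D v) (hp : Prime p) :
    Prime (algebraMap D (Algebra.adjoin D (Set.range v)) p) := by
  rw [← aevalEquiv_C hv, MulEquiv.prime_iff hv.aevalEquiv, MvPolynomial.prime_C_iff]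
  exact hp

theorem finiteMultiplicity_algebraMap_adjoin_range (hv : AlgebraicIndependent D v)
    (hfin : ∀ a ≠ 0, FiniteMultiplicity p a) {f : Algebra.adjoin D (Set.range v)} (hf : f ≠ 0) :
    FiniteMultiplicity (algebraMap D (Algebra.adjoin D (Set.range v)) p) f := by
  obtain ⟨g, rfl⟩ := hv.aevalEquiv.surjective f
  have hg : g ≠ 0 := fun h ↦ hf (by rw [h, map_zero])
  obtain ⟨m, hm⟩ := MvPolynomial.ne_zero_iff.mp hg
  rw [← aevalEquiv_C hv, ← emultiplicity_lt_top, emultiplicity_map_eq, emultiplicity_lt_top]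
  exact finiteMultiplicity_mvPolynomial_C (hfin _ hm)

end PolynomialExtension

theorem stmt2_general {D R : Type*} [CommRing D] [CommRing R] [Algebra D R] [FaithfulSMul D R]
    {p : D} (hp : Prime p) (hfin : ∀ a ≠ 0, FiniteMultiplicity p a)
    (hpu : IsUnit (algebraMap D R p)) : Submaximal R := by
  have : Nontrivial D := ⟨p, 0, hp.ne_zero⟩
  obtain ⟨s, hs⟩ := exists_isTranscendenceBasis D R
  have := hs.isAlgebraic
  exact submaximal_of_isAlgebraic (prime_algebraMap_adjoin_range hs.1 hp)
    (fun _ ↦ finiteMultiplicity_algebraMap_adjoin_range hs.1 hfin) hpu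

theorem stmt2 {R : Type*} [CommRing R] [Nontrivial R] (D : Subring R)
    [IsDomain D] [UniqueFactorizationMonoid D]
    (p : D) (hp : Irreducible p) (hpu : IsUnit (p : R)) :
    Submaximal R :=
  stmt2_general hp.prime (fun _ ↦ FiniteMultiplicity.of_prime_left hp.prime) hpu
end

section
/- Let R be a commutative ring whose characteristic is a nonzero square-free integer. Then either R has a maximal subring or the group of units U(R) is a torsion group. -/
/-!
If `R` is generated by a proper subring together with one element `v`, then Zorn's lemma applied to
the subrings avoiding `v` gives a maximal subring. With `n ≠ 0` the characteristic, a unit integral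
over `ℤ/n` lies in a finite subring, so it is torsion. If some unit `u` is not integral, it stays
non-integral in the residue field `K` at a prime disjoint from the values at `u` of monic
polynomials; there it is transcendental over the finite residue field of `ℤ/n`. Extend it to a
transcendence basis of `K`; it is then a prime element of a polynomial ring over which `K` is
algebraic, and a valuation ring `V` of `K` centred on this prime satisfies `u⁻¹ ∉ V` and
`V[u⁻¹] = K`. The preimage of `V` in `R` together with `u⁻¹` generates `R`.
-/

theorem submaximal_of_closure_insert_eq_top {R : Type*} [CommRing R] {T : Subring R} {v : R}
    (hv : v ∉ T) (htop : Subring.closure (insert v (T : Set R)) = ⊤) : Submaximal R := by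
  obtain ⟨M, hTM, hM⟩ : ∃ M, T ≤ M ∧ Maximal (· ∈ {S : Subring R | v ∉ S}) M := by
    refine zorn_le_nonempty₀ _ (fun c hc hchain S hS ↦ ⟨sSup c, ?_, fun _ ↦ le_sSup⟩) T hv
    rw [Set.mem_ofPred_eq, Subring.mem_sSup_of_directedOn ⟨S, hS⟩ hchain.directedOn]
    rintro ⟨S', hS', hvS'⟩
    exact hc hS' hvS'
  refine ⟨M, fun h ↦ hM.prop (h ▸ Subring.mem_top v), fun S hMS ↦ ?_⟩
  have hvS : v ∈ S := by_contra fun h ↦ hMS.not_ge (hM.le_of_ge h hMS.le)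
  rw [eq_top_iff, ← htop, Subring.closure_le]
  exact Set.insert_subset hvS (hTM.trans hMS.le)

theorem submaximal_of_forall_exists_pow_mul_mem {R : Type*} [CommRing R] {T : Subring R} {u : Rˣ}
    (hu : (↑u⁻¹ : R) ∉ T) (h : ∀ y : R, ∃ k : ℕ, (u : R) ^ k * y ∈ T) : Submaximal R := by
  refine submaximal_of_closure_insert_eq_top hu (eq_top_iff.2 fun y _ ↦ ?_)
  obtain ⟨k, hk⟩ := h y
  have hy : y = (↑u⁻¹ : R) ^ k * ((u : R) ^ k * y) := by
    rw [← mul_assoc, ← mul_pow, Units.inv_mul, one_pow, one_mul]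
  rw [hy]
  exact mul_mem (pow_mem (Subring.subset_closure (Set.mem_insert _ _)) k)
    (Subring.subset_closure (Set.mem_insert_of_mem _ hk))

/-- `x` is a pseudouniformizer of the valuation ring `V` of `K`: a nonzero element of the maximal
ideal with `V[x⁻¹] = K`. The last condition is encoded by clearing denominators: every element of
`K` is moved into `V` by some power of `x`. -/
structure IsPseudouniformizer {K : Type*} [Field K] (V : ValuationSubring K) (x : K) : Prop where
  ne_zero : x ≠ 0
  valuation_lt_one : V.valuation x < 1
  exists_pow_mul_mem : ∀ y : K, ∃ k : ℕ, x ^ k * y ∈ V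

theorem IsPseudouniformizer.inv_notMem {K : Type*} [Field K] {V : ValuationSubring K} {x : K}
    (hx : IsPseudouniformizer V x) : x⁻¹ ∉ V := by
  rw [← V.valuation_le_one_iff, map_inv₀, not_le]
  exact (one_lt_inv₀ (V.valuation.pos_iff.2 hx.ne_zero)).2 hx.valuation_lt_one

theorem submaximal_of_isPseudouniformizer_map {R K : Type*} [CommRing R] [Field K] (φ : R →+* K)
    {V : ValuationSubring K} {u : Rˣ} (hu : IsPseudouniformizer V (φ u)) : Submaximal R := by
  refine submaximal_of_forall_exists_pow_mul_mem (T := V.toSubring.comap φ) (u := u) ?_ fun y ↦ ?_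
  · rw [Subring.mem_comap, map_units_inv]
    exact hu.inv_notMem
  · obtain ⟨k, hk⟩ := hu.exists_pow_mul_mem (φ y)
    exact ⟨k, by rwa [Subring.mem_comap, map_mul, map_pow]⟩

theorem exists_valuationSubring_forall_valuation_lt_one_iff_mem {A K : Type*} [CommRing A] [Field K]
    [Algebra A K] [FaithfulSMul A K] (P : Ideal A) [P.IsPrime] :
    ∃ V : ValuationSubring K, (∀ a, algebraMap A K a ∈ V) ∧
      ∀ a, V.valuation (algebraMap A K a) < 1 ↔ a ∈ P := by
  let f : Localization.AtPrime P →+* K := IsLocalization.lift (M := P.primeCompl)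
    (g := algebraMap A K) fun s ↦ isUnit_iff_ne_zero.2 <|
      (map_ne_zero_iff _ (FaithfulSMul.algebraMap_injective A K)).2 fun hs ↦ s.2 (hs ▸ P.zero_mem)
  have hf (a : A) : f (algebraMap A _ a) = algebraMap A K a := IsLocalization.lift_eq _ a
  obtain ⟨V, hfV, hlocal⟩ := IsLocalRing.exists_factor_valuationRing f
  refine ⟨V, fun a ↦ hf a ▸ hfV _, fun a ↦ ?_⟩
  let g : Localization.AtPrime P →+* V := f.codRestrict V.toSubring hfV
  have : IsLocalHom g := hlocal
  calc V.valuation (algebraMap A K a) < 1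
    _ ↔ g (algebraMap A _ a) ∈ IsLocalRing.maximalIdeal V := by
      rw [← hf]
      exact (V.valuation_lt_one_iff (g (algebraMap A _ a))).symm
    _ ↔ algebraMap A _ a ∈ IsLocalRing.maximalIdeal (Localization.AtPrime P) :=
      map_mem_nonunits_iff g _
    _ ↔ a ∈ P := IsLocalization.AtPrime.to_map_mem_maximal_iff _ P a

theorem mem_valuationSubring_of_isIntegral {A K : Type*} [CommRing A] [Field K] [Algebra A K]
    {V : ValuationSubring K} (hV : ∀ a, algebraMap A K a ∈ V) {x : K} (hx : IsIntegral A x) :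
    x ∈ V := by
  have hxV : IsIntegral V x :=
    hx.map_of_comp_eq ((algebraMap A K).codRestrict V hV) (RingHom.id K) rfl
  obtain ⟨y, rfl⟩ := IsIntegrallyClosed.isIntegral_iff.1 hxV
  exact y.2

theorem exists_isPseudouniformizer_of_prime {A K : Type*} [CommRing A] [IsDomain A] [WfDvdMonoid A]
    [Field K] [Algebra A K] [FaithfulSMul A K] [Algebra.IsAlgebraic A K] {q : A} (hq : Prime q) :
    ∃ V : ValuationSubring K, IsPseudouniformizer V (algebraMap A K q) := by
  have : (Ideal.span {q}).IsPrime := (Ideal.span_singleton_prime hq.ne_zero).2 hq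
  obtain ⟨V, hAV, hV⟩ :=
    exists_valuationSubring_forall_valuation_lt_one_iff_mem (K := K) (Ideal.span {q})
  have hq0 : algebraMap A K q ≠ 0 :=
    (map_ne_zero_iff _ (FaithfulSMul.algebraMap_injective A K)).2 hq.ne_zero
  refine ⟨V, hq0, (hV q).2 (Ideal.mem_span_singleton_self q), fun y ↦ ?_⟩
  obtain ⟨a, ha, hay⟩ := (Algebra.IsAlgebraic.isAlgebraic (R := A) y).exists_integral_multiple
  obtain ⟨c, hqc, hc⟩ :=
    (FiniteMultiplicity.of_not_isUnit hq.not_isUnit ha).exists_eq_pow_mul_and_not_dvd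
  refine ⟨multiplicity q a, ?_⟩
  have hvc : V.valuation (algebraMap A K c) = 1 :=
    (V.valuation_lt_one_or_eq_one ⟨_, hAV c⟩).resolve_left fun h ↦
      hc (Ideal.mem_span_singleton.1 ((hV c).1 h))
  have hay_eq : a • y = algebraMap A K c * (algebraMap A K q ^ multiplicity q a * y) := by
    conv_lhs => rw [Algebra.smul_def, hqc, map_mul, map_pow]
    ring
  have hay_mem : a • y ∈ V := mem_valuationSubring_of_isIntegral hAV hay
  rwa [hay_eq, ← V.valuation_le_one_iff, map_mul, hvc, one_mul, V.valuation_le_one_iff] at hay_mem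

theorem exists_isPseudouniformizer_of_transcendental {F K : Type*} [CommRing F] [IsDomain F]
    [UniqueFactorizationMonoid F] [Field K] [Algebra F K] {x : K} (hx : Transcendental F x) :
    ∃ V : ValuationSubring K, IsPseudouniformizer V x := by
  have hind : AlgebraicIndepOn F id {x} :=
    (algebraicIndependent_singleton_iff (⟨x, rfl⟩ : ({x} : Set K))).2 hx
  obtain ⟨t, hxt, ht⟩ := exists_isTranscendenceBasis_superset hind
  let A := Algebra.adjoin F (Set.range ((↑) : t → K))
  let e : MvPolynomial t F ≃ₐ[F] A := ht.1.aevalEquiv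
  let i : t := ⟨x, hxt rfl⟩
  have : UniqueFactorizationMonoid A := e.toMulEquiv.uniqueFactorizationMonoid inferInstance
  have : Algebra.IsAlgebraic A K := ht.isAlgebraic
  have hprime : Prime (e (MvPolynomial.X i)) :=
    (MulEquiv.prime_iff e.toMulEquiv).2 MvPolynomial.X_prime
  have hX : algebraMap A K (e (MvPolynomial.X i)) = x := by
    rw [ht.1.algebraMap_aevalEquiv, MvPolynomial.aeval_X]
  simpa only [hX] using exists_isPseudouniformizer_of_prime (K := K) hprime

theorem exists_isPseudouniformizer_of_not_isIntegral {A K : Type*} [CommRing A]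
    [Ring.KrullDimLE 0 A] [Field K] [Algebra A K] {x : K} (hx : ¬ IsIntegral A x) :
    ∃ V : ValuationSubring K, IsPseudouniformizer V x := by
  let P := RingHom.ker (algebraMap A K)
  have : P.IsPrime := RingHom.ker_isPrime _
  let _ : Field (A ⧸ P) := Ideal.Quotient.field P
  let _ : Algebra (A ⧸ P) K := (RingHom.kerLift (algebraMap A K)).toAlgebra
  have : IsScalarTower A (A ⧸ P) K := .of_algebraMap_eq fun _ ↦ rfl
  exact exists_isPseudouniformizer_of_transcendental (F := A ⧸ P) fun halg ↦
    hx (isIntegral_trans x halg.isIntegral)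

theorem exists_isPrime_not_isIntegral_residueField {A S : Type*} [CommRing A] [CommRing S]
    [Algebra A S] {x : S} (hx : ¬ IsIntegral A x) :
    ∃ (Q : Ideal S) (_ : Q.IsPrime), ¬ IsIntegral A (algebraMap S Q.ResidueField x) := by
  let M : Submonoid S :=
    { carrier := {y | ∃ f : Polynomial A, f.Monic ∧ Polynomial.aeval x f = y}
      one_mem' := ⟨1, Polynomial.monic_one, map_one _⟩
      mul_mem' := by
        rintro _ _ ⟨f, hf, rfl⟩ ⟨g, hg, rfl⟩
        exact ⟨f * g, hf.mul hg, map_mul _ _ _⟩ }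
  have hM : Disjoint ((⊥ : Ideal S) : Set S) M := by
    rw [Set.disjoint_left]
    rintro _ rfl ⟨f, hf, hfx⟩
    exact hx ⟨f, hf, hfx⟩
  obtain ⟨Q, hQ, -, hQM⟩ := Ideal.exists_le_prime_disjoint ⊥ M hM
  refine ⟨Q, hQ, ?_⟩
  rintro ⟨f, hf, hfx⟩
  have hfQ : Polynomial.aeval x f ∈ Q := by
    rw [← Ideal.algebraMap_residueField_eq_zero, ← Polynomial.aeval_algebraMap_apply]
    exact hfx
  exact Set.disjoint_left.1 hQM hfQ ⟨f, hf, rfl⟩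

theorem submaximal_of_not_isIntegral {A R : Type*} [CommRing A] [Ring.KrullDimLE 0 A] [CommRing R]
    [Algebra A R] {u : Rˣ} (hu : ¬ IsIntegral A (u : R)) : Submaximal R := by
  obtain ⟨Q, _, huQ⟩ := exists_isPrime_not_isIntegral_residueField hu
  obtain ⟨V, hV⟩ := exists_isPseudouniformizer_of_not_isIntegral huQ
  exact submaximal_of_isPseudouniformizer_map (algebraMap R Q.ResidueField) hV

theorem isOfFinOrder_of_isIntegral {A S : Type*} [CommRing A] [Finite A] [CommRing S] [Algebra A S]
    {u : Sˣ} (hu : IsIntegral A (u : S)) : IsOfFinOrder u := by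
  have : Module.Finite A (Algebra.adjoin A {(u : S)}) :=
    Module.Finite.iff_fg.2 hu.fg_adjoin_singleton
  have : Finite (Algebra.adjoin A {(u : S)}) := Module.finite_of_finite A
  rw [← finite_powers]
  refine Set.Finite.of_finite_image (f := Units.val)
    ((Set.toFinite (Algebra.adjoin A {(u : S)} : Set S)).subset ?_) Units.val_injective.injOn
  rintro _ ⟨_, ⟨k, rfl⟩, rfl⟩
  exact pow_mem (Algebra.self_mem_adjoin_singleton A (u : S)) k

theorem stmt8_general {R : Type*} [CommRing R] (n : ℕ) (hn : n ≠ 0) [CharP R n] :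
    Submaximal R ∨ ∀ u : Rˣ, IsOfFinOrder u := by
  have : NeZero n := ⟨hn⟩
  let _ : Algebra (ZMod n) R := ZMod.algebra R n
  by_cases h : ∀ u : Rˣ, IsIntegral (ZMod n) (u : R)
  · exact .inr fun u ↦ isOfFinOrder_of_isIntegral (h u)
  · obtain ⟨u, hu⟩ := not_forall.1 h
    exact .inl (submaximal_of_not_isIntegral hu)

theorem stmt8 {R : Type*} [CommRing R] (n : ℕ) (hn : n ≠ 0) (hsq : Squarefree n)
    [CharP R n] :
    Submaximal R ∨ ∀ u : Rˣ, IsOfFinOrder u :=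
  stmt8_general n hn
end

section
/- Let R be a von Neumann regular commutative ring. Then either R has a maximal subring or R is periodic, i.e., for every x ∈ R there exists a natural number n ≥ 1 with x^{n+1} = x (equivalently, x^n = x^{2n} for some n ≥ 1). -/
/-!
Since `x ^ (m + 1) - x` divides `x ^ (m * n + 1) - x`, either some `x ^ (n + 1) - x` with `n ≥ 1` is
nilpotent or a single prime `P` avoids all of them. In a zero-dimensional ring the latter makes
`R ⧸ P` a field in which `x` is not periodic, and a maximal subring of `R ⧸ P` pulls back to `R`.

A field `E` with a non-periodic element has characteristic zero or is transcendental over some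
`ZMod p`. A transcendence basis makes `E` algebraic over a polynomial ring over `ℤ` or `ZMod p`,
a factorial ring with a prime `π`: the constant `2`, respectively a variable. After localizing at
`(π)` every nonzero element divides a power of `π`, so the integral closure `A` of the localization
in `E` satisfies `π⁻¹ ∉ A` and `A[π⁻¹] = E`. A subring maximal among those containing `A` but not
`π⁻¹` is then a maximal subring of `E`.
-/

theorem Submaximal.of_surjective {R S : Type*} [CommRing R] [CommRing S] {f : R →+* S}
    (hf : Function.Surjective f) (hS : Submaximal S) : Submaximal R := by
  obtain ⟨A, hA, hmax⟩ := hS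
  refine ⟨A.comap f, fun htop => hA ?_, fun T hT => ?_⟩
  · rw [← Subring.map_comap_eq_self_of_surjective hf A, htop, ← RingHom.range_eq_map,
      RingHom.range_eq_top.2 hf]
  · have hker : f ⁻¹' {0} ⊆ T := fun r hr => hT.le <| by
      rw [Subring.mem_comap, Set.mem_singleton_iff.1 hr]
      exact A.zero_mem
    have hTf : (T.map f).comap f = T := Subring.comap_map_eq_self hker
    have hlt : A < T.map f := by
      refine lt_of_le_of_ne ?_ fun heq => hT.ne (heq ▸ hTf)
      rw [← Subring.map_comap_eq_self_of_surjective hf A]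
      exact (Subring.gc_map_comap f).monotone_l hT.le
    rw [← hTf, hmax _ hlt, Subring.comap_top]

theorem submaximal_of_sup_closure_singleton_eq_top_s9 {R : Type*} [CommRing R] {A : Subring R} {y : R}
    (hy : y ∉ A) (hA : A ⊔ Subring.closure {y} = ⊤) : Submaximal R := by
  obtain ⟨M, hAM, hM⟩ := zorn_le_nonempty₀ {T : Subring R | y ∉ T} (fun c hc hchain B hB =>
    ⟨sSup c, fun hyc => by
      obtain ⟨T, hT, hyT⟩ :=
        (Subring.mem_sSup_of_directedOn ⟨B, hB⟩ hchain.directedOn).1 hyc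
      exact hc hT hyT, fun _ => le_sSup⟩) A hy
  refine ⟨M, fun htop => hM.prop (htop ▸ Subring.mem_top y), fun T hMT => ?_⟩
  have hyT : y ∈ T := not_not.1 (hM.not_prop_of_gt hMT)
  rw [eq_top_iff, ← hA]
  exact sup_le (hAM.trans hMT.le) (Subring.closure_le.2 (Set.singleton_subset_iff.2 hyT))

theorem exists_dvd_pow_of_isLocalization_atPrime {D L : Type*} [CommRing D] [WfDvdMonoid D]
    [CommRing L] [Algebra D L] {π : D} [(Ideal.span {π}).IsPrime]
    [IsLocalization.AtPrime L (Ideal.span {π})] {d : L} (hd : d ≠ 0) :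
    ∃ n : ℕ, d ∣ algebraMap D L π ^ n := by
  obtain ⟨⟨a, s⟩, hs⟩ := IsLocalization.surj (Ideal.span {π}).primeCompl d
  have ha : a ≠ 0 := by
    rintro rfl
    rw [map_zero] at hs
    exact hd ((IsLocalization.map_units L s).mul_left_eq_zero.1 hs)
  have hπ : ¬ IsUnit π := Ideal.span_singleton_eq_top.not.1 (Ideal.IsPrime.ne_top ‹_›)
  obtain ⟨n, b, hb, rfl⟩ := WfDvdMonoid.max_power_factor' ha hπ
  have hbu : IsUnit (algebraMap D L b) :=
    (IsLocalization.AtPrime.isUnit_to_map_iff L (Ideal.span {π}) b).2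
      (Ideal.mem_span_singleton.not.2 hb)
  rw [map_mul, map_pow] at hs
  exact ⟨n, hbu.dvd_mul_right.1 (Dvd.intro _ hs)⟩

section AlgebraicOverDomain

variable {D E : Type*} [CommRing D] [Field E] [Algebra D E] [FaithfulSMul D E]

theorem not_isIntegral_inv_algebraMap {π : D} (hπ : ¬ IsUnit π) (hπ₀ : π ≠ 0) :
    ¬ IsIntegral D (algebraMap D E π)⁻¹ := fun hinteg => by
  have hE : algebraMap D E π ≠ 0 := (FaithfulSMul.algebraMap_eq_zero_iff D E).not.2 hπ₀
  have : FaithfulSMul D (integralClosure D E) := .tower_bot D _ E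
  have hunit : IsUnit (algebraMap D (integralClosure D E) π) :=
    .of_mul_eq_one ⟨_, hinteg⟩ (Subtype.ext (mul_inv_cancel₀ hE))
  exact hπ (isUnit_of_map_unit _ _ hunit)

variable [Algebra.IsAlgebraic D E]

theorem submaximal_of_forall_dvd_pow {π : D} (hπ : ¬ IsUnit π) (hπ₀ : π ≠ 0)
    (hdvd : ∀ d : D, d ≠ 0 → ∃ n : ℕ, d ∣ π ^ n) : Submaximal E := by
  have hE : algebraMap D E π ≠ 0 := (FaithfulSMul.algebraMap_eq_zero_iff D E).not.2 hπ₀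
  refine submaximal_of_sup_closure_singleton_eq_top_s9 (A := (integralClosure D E).toSubring)
    (not_isIntegral_inv_algebraMap hπ hπ₀) (eq_top_iff.2 fun e _ => ?_)
  obtain ⟨d, hd, hde⟩ := (Algebra.IsAlgebraic.isAlgebraic (R := D) e).exists_integral_multiple
  obtain ⟨n, c, hc⟩ := hdvd d hd
  have hinteg : IsIntegral D (algebraMap D E π ^ n * e) := by
    rw [← map_pow, hc, mul_comm d, map_mul, mul_assoc, ← Algebra.smul_def, ← Algebra.smul_def]
    exact hde.smul c
  have he : e = algebraMap D E π ^ n * e * (algebraMap D E π)⁻¹ ^ n := by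
    rw [inv_pow, mul_right_comm, mul_inv_cancel₀ (pow_ne_zero n hE), one_mul]
  have hinv : (algebraMap D E π)⁻¹ ∈ Subring.closure {(algebraMap D E π)⁻¹} :=
    Subring.subset_closure (Set.mem_singleton _)
  rw [he]
  exact mul_mem (SetLike.le_def.1 le_sup_left hinteg)
    (pow_mem (SetLike.le_def.1 le_sup_right hinv) n)

theorem submaximal_of_isAlgebraic_of_prime [WfDvdMonoid D] {π : D} (hπ : Prime π) :
    Submaximal E := by
  have : IsDomain D := .of_faithfulSMul D E
  have : (Ideal.span {π}).IsPrime := (Ideal.span_singleton_prime hπ.ne_zero).2 hπ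
  set P := Ideal.span {π}
  have hunits (s : P.primeCompl) : IsUnit (algebraMap D E s) := by
    rw [isUnit_iff_ne_zero, Ne, FaithfulSMul.algebraMap_eq_zero_iff]
    exact fun hs => s.2 (hs ▸ P.zero_mem)
  let f : Localization.AtPrime P →+* E := IsLocalization.lift hunits
  let : Algebra (Localization.AtPrime P) E := f.toAlgebra
  have : IsScalarTower D (Localization.AtPrime P) E :=
    .of_algebraMap_eq fun d => (IsLocalization.lift_eq hunits d).symm
  have : FaithfulSMul (Localization.AtPrime P) E := by
    rw [faithfulSMul_iff_algebraMap_injective,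
      IsLocalization.injective_iff_map_algebraMap_eq P.primeCompl]
    simp [← IsScalarTower.algebraMap_apply]
  have : Algebra.IsAlgebraic (Localization.AtPrime P) E :=
    .extendScalars (FaithfulSMul.algebraMap_injective D _)
  refine submaximal_of_forall_dvd_pow (D := Localization.AtPrime P)
    (π := algebraMap D _ π) ?_ ?_ fun _ => exists_dvd_pow_of_isLocalization_atPrime
  · rw [IsLocalization.AtPrime.isUnit_to_map_iff _ P]
    exact fun h => h (Ideal.mem_span_singleton_self π)
  · exact (FaithfulSMul.algebraMap_eq_zero_iff D _).not.2 hπ.ne_zero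

end AlgebraicOverDomain

section TranscendenceBasis

variable {D E : Type*} [CommRing D] [UniqueFactorizationMonoid D] [Field E] [Algebra D E]

theorem submaximal_of_isTranscendenceBasis_of_prime {ι : Type*} {x : ι → E}
    (hx : IsTranscendenceBasis D x) {π : MvPolynomial ι D} (hπ : Prime π) : Submaximal E := by
  have : FaithfulSMul D E :=
    (faithfulSMul_iff_algebraMap_injective D E).2 hx.1.algebraMap_injective
  have : IsDomain D := .of_faithfulSMul D E
  let e := hx.1.aevalEquiv.toMulEquiv
  have : UniqueFactorizationMonoid (Algebra.adjoin D (Set.range x)) :=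
    e.uniqueFactorizationMonoid inferInstance
  have : Algebra.IsAlgebraic (Algebra.adjoin D (Set.range x)) E := hx.isAlgebraic
  exact submaximal_of_isAlgebraic_of_prime ((MulEquiv.prime_iff e).2 hπ)

variable [FaithfulSMul D E]

theorem submaximal_of_prime {π : D} (hπ : Prime π) : Submaximal E := by
  obtain ⟨s, hs⟩ := exists_isTranscendenceBasis D E
  exact submaximal_of_isTranscendenceBasis_of_prime hs ((MvPolynomial.prime_C_iff s).2 hπ)

theorem submaximal_of_transcendental [Algebra.Transcendental D E] : Submaximal E := by
  have : IsDomain D := .of_faithfulSMul D E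
  obtain ⟨s, hs⟩ := exists_isTranscendenceBasis D E
  obtain ⟨i⟩ := hs.nonempty_iff_transcendental.2 ‹_›
  exact submaximal_of_isTranscendenceBasis_of_prime hs (MvPolynomial.X_prime (i := i))

end TranscendenceBasis

open IntermediateField in
theorem exists_pow_succ_eq_self_of_isAlgebraic {K E : Type*} [Field K] [Finite K] [Field E]
    [Algebra K E] {x : E} (hx : IsAlgebraic K x) : ∃ n : ℕ, 1 ≤ n ∧ x ^ (n + 1) = x := by
  have := adjoin.finiteDimensional hx.isIntegral
  have : Finite K⟮x⟯ := Module.finite_of_finite K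
  have := Fintype.ofFinite K⟮x⟯
  obtain ⟨n, hn⟩ := Nat.exists_eq_add_of_lt (Fintype.one_lt_card (α := K⟮x⟯))
  have hpow := congrArg (algebraMap K⟮x⟯ E)
    (FiniteField.pow_card (AdjoinSimple.gen K x))
  rw [map_pow, AdjoinSimple.algebraMap_gen, hn] at hpow
  exact ⟨n + 1, n.succ_pos, by rwa [add_right_comm, add_comm n 1]⟩

theorem submaximal_or_forall_exists_pow_succ_eq_self (E : Type*) [Field E] :
    Submaximal E ∨ ∀ x : E, ∃ n : ℕ, 1 ≤ n ∧ x ^ (n + 1) = x := by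
  obtain ⟨p, hp⟩ := CharP.exists E
  rcases CharP.char_is_prime_or_zero E p with hprime | rfl
  · have : Fact p.Prime := ⟨hprime⟩
    let := ZMod.algebra E p
    by_cases halg : Algebra.IsAlgebraic (ZMod p) E
    · exact .inr fun x => exists_pow_succ_eq_self_of_isAlgebraic (halg.isAlgebraic x)
    · have := Algebra.transcendental_iff_not_isAlgebraic.2 halg
      exact .inl (submaximal_of_transcendental (D := ZMod p))
  · have : CharZero E := CharP.charP_to_charZero E
    exact .inl (submaximal_of_prime Int.prime_two)

theorem pow_succ_sub_self_dvd_pow_mul_succ_sub_self {R : Type*} [CommRing R] (x : R) (m n : ℕ) :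
    x ^ (m + 1) - x ∣ x ^ (m * n + 1) - x := by
  have hfactor (k : ℕ) : x ^ (k + 1) - x = x * (x ^ k - 1) := by ring
  rw [hfactor, hfactor, pow_mul]
  exact mul_dvd_mul_left x (sub_one_dvd_pow_sub_one _ n)

theorem exists_isPrime_forall_notMem_of_directedOn_dvd {R : Type*} [CommRing R] {s : Set R}
    (hs : s.Nonempty) (hdir : DirectedOn (· ∣ ·) s) (hnil : ∀ a ∈ s, ¬ IsNilpotent a) :
    ∃ P : Ideal R, P.IsPrime ∧ ∀ a ∈ s, a ∉ P := by
  let M : Submonoid R :=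
    { carrier := {r | ∃ a ∈ s, ∃ k : ℕ, r ∣ a ^ k}
      one_mem' := hs.imp fun _ ha => ⟨ha, 0, one_dvd _⟩
      mul_mem' := by
        rintro r₁ r₂ ⟨a, ha, k, hr₁⟩ ⟨b, hb, l, hr₂⟩
        obtain ⟨c, hc, hac, hbc⟩ := hdir a ha b hb
        refine ⟨c, hc, k + l, ?_⟩
        rw [pow_add]
        exact mul_dvd_mul (hr₁.trans (pow_dvd_pow_of_dvd hac k))
          (hr₂.trans (pow_dvd_pow_of_dvd hbc l)) }
  have hM : Disjoint ((⊥ : Ideal R) : Set R) M := by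
    refine Set.disjoint_left.2 ?_
    rintro _ rfl ⟨a, ha, k, hk⟩
    exact hnil a ha ⟨k, zero_dvd_iff.1 hk⟩
  obtain ⟨P, hP, -, hPM⟩ := Ideal.exists_le_prime_disjoint ⊥ M hM
  exact ⟨P, hP, fun a ha haP => Set.disjoint_left.1 hPM haP ⟨a, ha, 1, (pow_one a).symm.dvd⟩⟩

theorem stmt9_general {R : Type*} [CommRing R] [Ring.KrullDimLE 0 R] :
    Submaximal R ∨ ∀ x : R, ∃ n : ℕ, 1 ≤ n ∧ IsNilpotent (x ^ (n + 1) - x) := by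
  refine or_iff_not_imp_left.2 fun hR x => ?_
  by_contra! hx
  have hdir : DirectedOn (· ∣ ·) ((fun n => x ^ (n + 1) - x) '' Set.Ici 1) :=
    directedOn_image.2 fun m hm n hn => ⟨m * n, Nat.mul_pos hm hn,
      pow_succ_sub_self_dvd_pow_mul_succ_sub_self x m n,
      mul_comm m n ▸ pow_succ_sub_self_dvd_pow_mul_succ_sub_self x n m⟩
  obtain ⟨P, hP, hxP⟩ := exists_isPrime_forall_notMem_of_directedOn_dvd
    (Set.nonempty_Ici.image _) hdir (Set.forall_mem_image.2 hx)
  let := Ideal.Quotient.field P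
  rcases submaximal_or_forall_exists_pow_succ_eq_self (R ⧸ P) with hsub | hper
  · exact hR (hsub.of_surjective Ideal.Quotient.mk_surjective)
  · obtain ⟨n, hn, hxn⟩ := hper (Ideal.Quotient.mk P x)
    exact hxP _ (Set.mem_image_of_mem _ hn) (Ideal.Quotient.eq.1 hxn)

theorem isReduced_of_forall_exists_eq_sq_mul {R : Type*} [CommRing R]
    (hvnr : ∀ x : R, ∃ y : R, x = x ^ 2 * y) : IsReduced R := by
  refine (isReduced_iff_pow_one_lt 2 one_lt_two).2 fun x hx => ?_
  obtain ⟨y, hy⟩ := hvnr x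
  rw [hy, hx, zero_mul]

theorem krullDimLE_zero_of_forall_exists_eq_sq_mul {R : Type*} [CommRing R]
    (hvnr : ∀ x : R, ∃ y : R, x = x ^ 2 * y) : Ring.KrullDimLE 0 R := by
  refine .mk₀ fun P hP => Ideal.isMaximal_iff.2
    ⟨P.one_notMem, fun J x hPJ hxP hxJ => ?_⟩
  obtain ⟨y, hy⟩ := hvnr x
  have hmem : x * (1 - x * y) ∈ P := by
    convert P.zero_mem using 1
    linear_combination hy
  have hsub : 1 - x * y ∈ J := hPJ ((hP.mem_or_mem hmem).resolve_left hxP)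
  simpa only [sub_add_cancel] using J.add_mem hsub (J.mul_mem_right y hxJ)

theorem stmt9 {R : Type*} [CommRing R] [Nontrivial R]
    (hvnr : ∀ x : R, ∃ y : R, x = x ^ 2 * y) :
    Submaximal R ∨ ∀ x : R, ∃ n : ℕ, 1 ≤ n ∧ x ^ (n + 1) = x := by
  have := isReduced_of_forall_exists_eq_sq_mul hvnr
  have := krullDimLE_zero_of_forall_exists_eq_sq_mul hvnr
  simpa only [isNilpotent_iff_eq_zero, sub_eq_zero] using stmt9_general (R := R)
end

section
/- Let R be a semi-local commutative ring (i.e., with finitely many maximal ideals) of characteristic zero. Then R has a maximal subring. -/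
/-!
Finitely many maximal ideals can contain only finitely many primes, so some prime `q` is a unit of
`R`. A subring that is maximal among those that contain a given `S` and avoid `q⁻¹` is a maximal
subring as soon as `S[q⁻¹] = R`, so it is enough to find `S` with `q⁻¹ ∉ S` and `S[q⁻¹] = R`. Such
subrings pull back along ring homomorphisms, and `R` maps to a field `K` of characteristic zero.
In `K`, let `B` be the localization of `ℤ[X]` at the prime `(q)`, where `X` is a transcendence
basis of `K`, and let `S` be the integral closure of `B`. As `q` is not a unit of `B`, its inverse
is not in `S`; as every nonzero element of `B` divides a power of `q`, every element of `K` has a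
multiple by a power of `q` in `S`.
-/

theorem exists_subring_le_maximal_notMem {R : Type*} [NonAssocRing R] {S : Subring R} {x : R}
    (hx : x ∉ S) :
    ∃ T : Subring R, S ≤ T ∧ Maximal (x ∉ ·) T := by
  refine zorn_le_nonempty₀ {T : Subring R | x ∉ T} (fun c hc hchain T hT ↦ ?_) S hx
  refine ⟨sSup c, fun hxc ↦ ?_, fun _ ↦ le_sSup⟩
  obtain ⟨T', hT', hxT'⟩ := (Subring.mem_sSup_of_directedOn ⟨T, hT⟩ hchain.directedOn).1 hxc
  exact hc hT' hxT'

theorem submaximal_of_units_inv_notMem {R : Type*} [CommRing R] {S : Subring R} (u : Rˣ)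
    (hu : ↑u⁻¹ ∉ S) (hS : ∀ x : R, ∃ n : ℕ, ↑u ^ n * x ∈ S) : Submaximal R := by
  obtain ⟨M, hSM, hM⟩ := exists_subring_le_maximal_notMem hu
  refine ⟨M, fun hMtop ↦ hM.prop (hMtop ▸ Subring.mem_top _), fun T hMT ↦ ?_⟩
  have huT : ↑u⁻¹ ∈ T := not_not.1 (hM.not_prop_of_gt hMT)
  refine eq_top_iff.2 fun x _ ↦ ?_
  obtain ⟨n, hn⟩ := hS x
  have hx : ↑u⁻¹ ^ n * (↑u ^ n * x) = x := by
    rw [← mul_assoc, ← mul_pow, Units.inv_mul, one_pow, one_mul]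
  exact hx ▸ T.mul_mem (T.pow_mem huT n) (hMT.le (hSM hn))

theorem algebraMap_inv_notMem_integralClosure {B K : Type*} [CommRing B] [Field K]
    [Algebra B K] [FaithfulSMul B K] {b : B} (hb0 : b ≠ 0) (hb : ¬IsUnit b) :
    (algebraMap B K b)⁻¹ ∉ integralClosure B K := by
  intro hmem
  have hb0' : algebraMap B K b ≠ 0 := by simpa using hb0
  have hunit : IsUnit (algebraMap B (integralClosure B K) b) :=
    .of_mul_eq_one ⟨_, hmem⟩ (Subtype.ext (mul_inv_cancel₀ hb0'))
  have : FaithfulSMul B (integralClosure B K) := .tower_bot B (integralClosure B K) K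
  exact hb (isUnit_of_map_unit _ _ hunit)

theorem exists_pow_mul_mem_integralClosure {B C : Type*} [CommRing B] [CommRing C]
    [Algebra B C] [Algebra.IsAlgebraic B C] {b : B}
    (hb : ∀ a : B, a ≠ 0 → ∃ n : ℕ, a ∣ b ^ n) (x : C) :
    ∃ n : ℕ, algebraMap B C b ^ n * x ∈ integralClosure B C := by
  obtain ⟨a, ha, hax⟩ := (Algebra.IsAlgebraic.isAlgebraic (R := B) x).exists_integral_multiple
  obtain ⟨n, c, hc⟩ := hb a ha
  refine ⟨n, ?_⟩
  have h : algebraMap B C b ^ n * x = c • a • x := by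
    rw [← map_pow, hc, smul_smul, mul_comm c, Algebra.smul_def]
  exact h ▸ hax.smul c

theorem exists_dvd_pow_of_isLocalization_atPrime_s16 {A B : Type*} [CommRing A] [IsDomain A]
    [WfDvdMonoid A] [CommRing B] [Algebra A B] {q : A} (hq : Prime q) [(Ideal.span {q}).IsPrime]
    [IsLocalization.AtPrime B (Ideal.span {q})] {b : B} (hb : b ≠ 0) :
    ∃ n : ℕ, b ∣ algebraMap A B q ^ n := by
  obtain ⟨a, s, rfl⟩ := IsLocalization.exists_mk'_eq (Ideal.span {q}).primeCompl b
  have ha : a ≠ 0 := by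
    rintro rfl
    exact hb (IsLocalization.mk'_zero s)
  obtain ⟨c, hac, hqc⟩ := (FiniteMultiplicity.of_prime_left hq ha).exists_eq_pow_mul_and_not_dvd
  have hc : IsUnit (algebraMap A B c) :=
    IsLocalization.map_units B (⟨c, mt Ideal.mem_span_singleton.1 hqc⟩ :
      (Ideal.span {q}).primeCompl)
  refine ⟨multiplicity q a, hc.dvd_mul_right.1 ⟨algebraMap A B s, ?_⟩⟩
  rw [IsLocalization.mk'_spec, ← map_pow, ← map_mul, ← hac]

theorem exists_subring_inv_notMem_of_prime {K : Type*} [Field K] (A : Subring K)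
    [WfDvdMonoid A] [Algebra.IsAlgebraic A K] {q : A} (hq : Prime q) :
    ∃ S : Subring K, (q : K)⁻¹ ∉ S ∧ ∀ x : K, ∃ n : ℕ, (q : K) ^ n * x ∈ S := by
  have hP : (Ideal.span {q}).IsPrime := (Ideal.span_singleton_prime hq.ne_zero).2 hq
  let B : Subring K := (LocalSubring.ofPrime A (Ideal.span {q})).toSubring
  have hAB : Function.Injective (algebraMap A B) := Subring.inclusion_injective _
  have : Algebra.IsAlgebraic B K := .extendScalars hAB
  have hq0 : algebraMap A B q ≠ 0 := (map_ne_zero_iff _ hAB).2 hq.ne_zero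
  have hqu : ¬IsUnit (algebraMap A B q) := fun hu ↦
    (IsLocalization.AtPrime.isUnit_to_map_iff B (Ideal.span {q}) q).1 hu
      (Ideal.mem_span_singleton_self q)
  exact ⟨(integralClosure B K).toSubring, algebraMap_inv_notMem_integralClosure hq0 hqu,
    exists_pow_mul_mem_integralClosure fun _ ↦ exists_dvd_pow_of_isLocalization_atPrime_s16 hq⟩

theorem exists_subring_natCast_inv_notMem (K : Type*) [Field K] [CharZero K] {q : ℕ}
    (hq : q.Prime) :
    ∃ S : Subring K, (q : K)⁻¹ ∉ S ∧ ∀ x : K, ∃ n : ℕ, (q : K) ^ n * x ∈ S := by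
  obtain ⟨ι, x, hx⟩ := exists_isTranscendenceBasis' ℤ K
  let A : Subring K := (Algebra.adjoin ℤ (Set.range x)).toSubring
  let e : MvPolynomial ι ℤ ≃+* A := hx.1.aevalEquiv.toRingEquiv
  have : UniqueFactorizationMonoid A := e.toMulEquiv.uniqueFactorizationMonoid inferInstance
  have : Algebra.IsAlgebraic A K := hx.isAlgebraic
  have hqX : Prime (q : MvPolynomial ι ℤ) := by
    simpa using (MvPolynomial.prime_C_iff ι).2 (Nat.prime_iff_prime_int.1 hq)
  have hqA : Prime (q : A) := by simpa using (MulEquiv.prime_iff e.toMulEquiv).2 hqX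
  simpa using exists_subring_inv_notMem_of_prime A hqA

theorem exists_isPrime_charZero_quotient (R : Type*) [CommRing R] [CharZero R] :
    ∃ P : Ideal R, P.IsPrime ∧ CharZero (R ⧸ P) := by
  obtain ⟨P, hP, hPZ⟩ := Ideal.exists_comap_eq_of_mem_minimalPrimes_of_injective
    (f := Int.castRingHom R) Int.cast_injective ⊥
    (by simp [IsDomain.minimalPrimes_eq_singleton_bot])
  have hker : RingHom.ker ((Ideal.Quotient.mk P).comp (Int.castRingHom R)) = ⊥ := by
    rw [← RingHom.comap_ker, Ideal.mk_ker, hPZ]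
  exact ⟨P, hP, charZero_of_injective_ringHom ((RingHom.injective_iff_ker_eq_bot _).2 hker)⟩

theorem finite_setOf_not_isUnit_of_pairwise_isCoprime {R ι : Type*} [CommRing R]
    [Finite (MaximalSpectrum R)] {f : ι → R} (hf : Pairwise (Function.onFun IsCoprime f)) :
    {i | ¬IsUnit (f i)}.Finite := by
  have hmem : ∀ i : {i | ¬IsUnit (f i)}, ∃ M : MaximalSpectrum R, f i ∈ M.asIdeal := fun i ↦
    let ⟨M, hM, hiM⟩ := exists_max_ideal_of_mem_nonunits i.2
    ⟨⟨M, hM⟩, hiM⟩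
  choose M hM using hmem
  refine Finite.of_injective M fun i j hij ↦ Subtype.ext <| by_contra fun hne ↦ ?_
  obtain ⟨a, b, hab⟩ := hf hne
  have hMi : f i ∈ (M j).asIdeal := hij ▸ hM i
  refine (M j).isMaximal.ne_top ((Ideal.eq_top_iff_one _).2 ?_)
  exact hab ▸ add_mem (Ideal.mul_mem_left _ a hMi) (Ideal.mul_mem_left _ b (hM j))

theorem exists_prime_isUnit_natCast (R : Type*) [CommRing R] [Finite (MaximalSpectrum R)] :
    ∃ q : ℕ, q.Prime ∧ IsUnit (q : R) := by
  have hcop : Pairwise (Function.onFun IsCoprime fun p : Nat.Primes ↦ ((p : ℕ) : R)) :=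
    fun p q hpq ↦ ((Nat.coprime_primes p.2 q.2).2 (Nat.Primes.coe_nat_injective.ne hpq)).cast
  obtain ⟨q, hq⟩ := (finite_setOf_not_isUnit_of_pairwise_isCoprime hcop).exists_notMem
  exact ⟨q, q.2, not_not.1 hq⟩

theorem stmt16_general {R : Type*} [CommRing R] [CharZero R] {q : ℕ} (hq : q.Prime)
    (hqR : IsUnit (q : R)) : Submaximal R := by
  obtain ⟨u, hu⟩ := hqR
  obtain ⟨P, hP, hP0⟩ := exists_isPrime_charZero_quotient R
  let f : R →+* FractionRing (R ⧸ P) := (algebraMap (R ⧸ P) _).comp (Ideal.Quotient.mk P)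
  obtain ⟨S, hqS, hS⟩ := exists_subring_natCast_inv_notMem (FractionRing (R ⧸ P)) hq
  have hfu : f u = q := by rw [hu, map_natCast]
  refine submaximal_of_units_inv_notMem (S := S.comap f) u ?_ fun x ↦ ?_
  · rwa [Subring.mem_comap, map_units_inv, hfu]
  · simpa [hfu] using hS (f x)

theorem stmt16 {R : Type*} [CommRing R] [CharZero R]
    (hsl : {M : Ideal R | M.IsMaximal}.Finite) :
    Submaximal R := by
  have : Finite (MaximalSpectrum R) := (MaximalSpectrum.equivSubtype R).finite_iff.2 hsl
  obtain ⟨q, hq, hqR⟩ := exists_prime_isUnit_natCast R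
  exact stmt16_general hq hqR
end
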